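/- arXiv:1808.10293 — 14 statements merged into one kernel-verified Lean document; each statement's English description precedes it below -/
import Mathlib

section
/- Let G be a (bounded integral) left-residuated po-groupoid satisfying the divisibility law (x/y)·y = (y/x)·x and the equation x·y = ¬(¬x/y) for all x, y. Define x ⊕ y = ¬(¬x·¬y). Then (G, ⊕, ¬, 0) is a basic algebra, i.e., it satisfies the equations x ⊕ 0 = x; ¬¬x = x; ¬(¬x ⊕ y) ⊕ y = ¬(¬y ⊕ x) ⊕ x; and ¬(¬(¬(x ⊕ y) ⊕ y) ⊕ z) ⊕ (x ⊕ z) = ¬0. -/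
/-- A bounded integral left-residuated po-groupoid satisfying divisibility
`(x/y)·y = (y/x)·x` and `x·y = ¬(¬x/y)` gives a basic algebra via `x ⊕ y = ¬(¬x·¬y)`. -/
theorem stmt_0 {G : Type*} [PartialOrder G]
    (mul dvd : G → G → G) (z o : G)
    (hbot : ∀ x, z ≤ x) (htop : ∀ x, x ≤ o)
    (honer : ∀ x, mul x o = x) (honel : ∀ x, mul o x = x)
    (hres : ∀ x y w, mul x y ≤ w ↔ x ≤ dvd w y)
    (neg : G → G) (hneg : ∀ x, neg x = dvd z x)
    (hdiv : ∀ x y, mul (dvd x y) y = mul (dvd y x) x)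
    (hjk : ∀ x y, mul x y = neg (dvd (neg x) y))
    (op : G → G → G) (hop : ∀ x y, op x y = neg (mul (neg x) (neg y))) :
    (∀ x, op x z = x) ∧
    (∀ x, neg (neg x) = x) ∧
    (∀ x y, op (neg (op (neg x) y)) y = op (neg (op (neg y) x)) x) ∧
    (∀ x y w, op (neg (op (neg (op (neg (op x y)) y)) w)) (op x w) = neg z) := by
  have hdo : ∀ w, dvd w o = w := by
    intro w
    apply le_antisymm
    · have := (hres (dvd w o) o w).2 le_rfl
      rwa [honer] at this
    · rw [← hres, honer]
  have nn : ∀ x, neg (neg x) = x := by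
    intro x
    have := hjk x o
    rw [honer, hdo] at this
    exact this.symm
  have no : neg o = z := by rw [hneg, hdo]
  have nz : neg z = o := by rw [← no, nn]
  have hd : ∀ x y, neg (mul (neg x) y) = dvd x y := by
    intro x y
    rw [hjk, nn, nn]
  have hop2 : ∀ x y, op x y = dvd x (neg y) := by
    intro x y
    rw [hop, hd]
  refine ⟨?_, nn, ?_, ?_⟩
  · intro x
    rw [hop2, nz, hdo]
  · intro x y
    have key : ∀ x y, op (neg (op (neg x) y)) y
        = neg (mul (dvd (neg x) (neg y)) (neg y)) := by
      intro x y
      rw [hop, nn, hop2]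
    rw [key, key, hdiv]
  · intro x y w
    have h1 : neg (op (neg (op x y)) y) = mul (dvd x (neg y)) (neg y) := by
      rw [hop (neg (op x y)) y, nn, nn, hop2]
    have h2 : mul (dvd x (neg y)) (neg y) ≤ x := (hres _ _ _).2 le_rfl
    rw [h1]
    generalize mul (dvd x (neg y)) (neg y) = m at h2
    have h3 : op m w ≤ op x w := by
      rw [hop2, hop2, ← hres]
      exact ((hres _ _ _).2 le_rfl).trans h2
    rw [hop (neg (op m w)), nn]
    congr 1
    apply le_antisymm _ (hbot _)
    rw [hres, ← hneg, nn]
    exact h3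
end

section
/- Let (A, ⊕, ¬, 0) be a basic algebra. Set 1 = ¬0, define x·y = ¬(¬x ⊕ ¬y), x/y = x ⊕ ¬y, and define x ≤ y to mean ¬x ⊕ y = 1. Then ≤ is a partial order on A with least element 0 and greatest element 1, x·1 = x = 1·x for all x, the left residuation law x·y ≤ z ⇔ x ≤ z/y holds for all x, y, z, and moreover the divisibility law (x/y)·y = (y/x)·x and the equation x·y = ¬(¬x/y) hold; in addition 0/x = ¬x and x/¬y = x ⊕ y for all x, y. -/
/-- Every basic algebra `(A, ⊕, ¬, 0)` yields a bounded integral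
left-residuated po-groupoid via `1 = ¬0`, `x·y = ¬(¬x ⊕ ¬y)`, `x/y = x ⊕ ¬y`,
`x ≤ y ↔ ¬x ⊕ y = 1`, satisfying in addition divisibility, `x·y = ¬(¬x/y)`,
`0/x = ¬x` and `x/¬y = x ⊕ y`. -/
theorem stmt_1 {A : Type*} (op : A → A → A) (neg : A → A) (z : A)
    (hba1 : ∀ x, op x z = x)
    (hba2 : ∀ x, neg (neg x) = x)
    (hba3 : ∀ x y, op (neg (op (neg x) y)) y = op (neg (op (neg y) x)) x)
    (hba4 : ∀ x y w, op (neg (op (neg (op (neg (op x y)) y)) w)) (op x w) = neg z)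
    (o : A) (ho : o = neg z)
    (mul : A → A → A) (hmul : ∀ x y, mul x y = neg (op (neg x) (neg y)))
    (dvd : A → A → A) (hdvd : ∀ x y, dvd x y = op x (neg y))
    (le : A → A → Prop) (hle : ∀ x y, le x y ↔ op (neg x) y = o) :
    (∀ x, le x x) ∧
    (∀ x y, le x y → le y x → x = y) ∧
    (∀ x y w, le x y → le y w → le x w) ∧
    (∀ x, le z x) ∧
    (∀ x, le x o) ∧
    (∀ x, mul x o = x) ∧
    (∀ x, mul o x = x) ∧
    (∀ x y w, le (mul x y) w ↔ le x (dvd w y)) ∧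
    (∀ x y, mul (dvd x y) y = mul (dvd y x) x) ∧
    (∀ x y, mul x y = neg (dvd (neg x) y)) ∧
    (∀ x, dvd z x = neg x) ∧
    (∀ x y, dvd x (neg y) = op x y) := by
  subst ho
  have n1 : neg (neg z) = z := hba2 z
  have h6 : ∀ x, op (neg (op (neg z) x)) x = x := by
    intro x
    have := hba3 z x
    rw [this, hba1, hba1, hba2]
  have h10 : ∀ x y, op (op (neg (op x y)) y) x = neg z := by
    intro x y
    have := hba4 x y z
    rwa [hba1, hba1, hba2] at this
  have h11 : ∀ x, op x (neg z) = neg z := by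
    intro x
    have := h10 (neg z) x
    rwa [h6] at this
  have h12 : ∀ x, op (neg z) x = neg z := by
    intro x
    have := h10 x (neg z)
    rwa [h11] at this
  have h0 : ∀ x, op z x = x := by
    intro x
    have := h6 x
    rwa [h12, n1] at this
  have hr : ∀ x, op (neg x) x = neg z := by
    intro x
    have := h10 x z
    rwa [hba1, hba1] at this
  have hjoin : ∀ x y, op (neg x) y = neg z → op (neg (op (neg y) x)) x = y := by
    intro x y h
    rw [← hba3, h, n1, h0]
  have hanti : ∀ x y, op (neg x) y = neg z → op y (neg x) = neg z := by
    intro x y h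
    have := h10 (neg x) y
    rwa [h, n1, h0] at this
  have htr : ∀ x y w, op (neg x) y = neg z → op (neg y) w = neg z →
      op (neg x) w = neg z := by
    intro x y w h1 h2
    have := hba4 (neg x) y w
    rwa [h1, n1, h0, h2, n1, h0] at this
  have hmono : ∀ a b w, op (neg a) b = neg z → op (neg (op a w)) (op b w) = neg z := by
    intro a b w h
    have := hba4 b (neg a) w
    rwa [hanti _ _ h, n1, h0, hba2] at this
  have hup : ∀ x w, op (neg w) (op x w) = neg z := by
    intro x w
    have := hba4 x (neg z) w
    rwa [h11, n1, h0] at this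
  have hres : ∀ a c w, op (op a c) w = neg z → op (neg (neg a)) (op w c) = neg z ∧
      op a (op w c) = neg z := by
    intro a c w h
    have e1 : op (neg (op (neg (op a c)) c)) (op w c) = neg z := by
      apply hmono
      rwa [hba2]
    have e2 : op (neg (neg a)) (op (neg (op a c)) c) = neg z := by
      have := hba3 (neg a) c
      rw [hba2] at this
      rw [this]
      exact hup _ _
    have e3 := htr _ _ _ e2 e1
    exact ⟨e3, by rwa [hba2] at e3⟩
  simp only [hle, hmul, hdvd]
  refine ⟨hr, ?_, htr, h12, fun x => h11 _, ?_, ?_, ?_, ?_, ?_, fun x => h0 _, ?_⟩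
  · intro x y h1 h2
    have := hba3 x y
    rw [h1, h2, n1, h0, h0] at this
    exact this.symm
  · intro x
    rw [n1, hba1, hba2]
  · intro x
    rw [n1, h0, hba2]
  · intro x y w
    rw [hba2]
    constructor
    · intro h
      exact (hres _ _ _ h).2
    · intro h
      have e := hanti _ _ h
      have e2 := (hres _ _ _ e).2
      have e3 := hanti (neg w) (op (neg x) (neg y)) (by rwa [hba2])
      rwa [hba2] at e3
  · intro x y
    have := hba3 (neg x) (neg y)
    rw [hba2, hba2] at this
    rw [this]
  · intro x y
    trivial
  · intro x y
    rw [hba2]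
end

section
/- Let G be a (bounded integral) left-residuated po-groupoid satisfying the double negation law ¬¬x = x and the equation (x → y) → y = (y → x) → x, where x → y = ¬x/¬y. Define x ⊕ y = x/¬y. Then (G, ⊕, ¬, 0) is a basic algebra (it satisfies x ⊕ 0 = x; ¬¬x = x; ¬(¬x ⊕ y) ⊕ y = ¬(¬y ⊕ x) ⊕ x; ¬(¬(¬(x ⊕ y) ⊕ y) ⊕ z) ⊕ (x ⊕ z) = ¬0), and moreover x ⊕ ¬y = x/y and ¬(¬x ⊕ ¬y) = x·y for all x, y. -/
/-- A bounded integral left-residuated po-groupoid with `¬¬x = x` and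
`(x → y) → y = (y → x) → x` (where `x → y = ¬x/¬y`) gives a basic algebra via
`x ⊕ y = x/¬y`, with moreover `x ⊕ ¬y = x/y` and `¬(¬x ⊕ ¬y) = x·y`. -/
theorem stmt_2 {G : Type*} [PartialOrder G]
    (mul dvd : G → G → G) (z o : G)
    (hbot : ∀ x, z ≤ x) (htop : ∀ x, x ≤ o)
    (honer : ∀ x, mul x o = x) (honel : ∀ x, mul o x = x)
    (hres : ∀ x y w, mul x y ≤ w ↔ x ≤ dvd w y)
    (neg : G → G) (hneg : ∀ x, neg x = dvd z x)
    (arr : G → G → G) (harr : ∀ x y, arr x y = dvd (neg x) (neg y))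
    (hdn : ∀ x, neg (neg x) = x)
    (hw : ∀ x y, arr (arr x y) y = arr (arr y x) x)
    (op : G → G → G) (hop : ∀ x y, op x y = dvd x (neg y)) :
    (∀ x, op x z = x) ∧
    (∀ x, neg (neg x) = x) ∧
    (∀ x y, op (neg (op (neg x) y)) y = op (neg (op (neg y) x)) x) ∧
    (∀ x y w, op (neg (op (neg (op (neg (op x y)) y)) w)) (op x w) = neg z) ∧
    (∀ x y, op x (neg y) = dvd x y) ∧
    (∀ x y, neg (op (neg x) (neg y)) = mul x y) := by
  have hno : neg o = z := by
    apply le_antisymm _ (hbot _)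
    have h := (hres (neg o) o z).2 (by rw [hneg])
    rwa [honer] at h
  have hnz : neg z = o := by rw [← hno, hdn]
  have hd1 : ∀ x, dvd x o = x := by
    intro x
    apply le_antisymm
    · have h := (hres (dvd x o) o x).2 le_rfl
      rwa [honer] at h
    · rw [← hres, honer]
  have hmono : ∀ a b c, a ≤ b → dvd a c ≤ dvd b c := by
    intro a b c h
    rw [← hres]
    exact le_trans ((hres _ _ _).2 le_rfl) h
  have htop1 : ∀ a b, b ≤ a → dvd a b = o := by
    intro a b h
    apply le_antisymm (htop _)
    rwa [← hres, honel]
  have hc : ∀ y a, y ≤ dvd a (neg y) := by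
    intro y a
    rw [← hres]
    refine le_trans ((hres y (neg y) z).2 ?_) (hbot a)
    rw [← hneg, hdn]
  have hanti0 : ∀ x y, neg y ≤ neg x → x ≤ y := by
    intro x y h
    have h1 := hw x y
    rw [harr x y, htop1 _ _ h, harr o y, hno, ← hneg, hdn, harr (arr y x) x] at h1
    rw [h1]
    exact hc x _
  have hanti : ∀ x y, x ≤ y → neg y ≤ neg x := by
    intro x y h
    apply hanti0
    rwa [hdn, hdn]
  have hup : ∀ x y, x ≤ dvd (neg (dvd (neg x) (neg y))) (neg y) := by
    intro x y
    rw [← harr, ← harr, hw, harr]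
    exact hc x _
  have hle : ∀ x y, mul x y ≤ neg (dvd (neg x) y) := by
    intro x y
    have h := hup x (neg y)
    rw [hdn] at h
    exact (hres _ _ _).2 h
  refine ⟨?_, hdn, ?_, ?_, ?_, ?_⟩
  · intro x
    rw [hop, hnz, hd1]
  · intro x y
    simp only [hop, ← harr]
    exact hw x y
  · intro x y w
    rw [hnz, hop _ (op x w)]
    apply htop1
    apply hanti
    rw [hop _ w, hop x w]
    apply hmono
    apply hanti0
    rw [hdn, hop, hop]
    have h := hup (neg x) y
    rwa [hdn] at h
  · intro x y
    rw [hop, hdn]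
  · intro x y
    rw [hop, hdn]
    apply le_antisymm _ (hle x y)
    apply hanti0
    rw [hdn, ← hres]
    refine le_trans (hle _ _) ?_
    rw [hdn]
    apply hanti
    rw [← hres]
end

section
/- Let (G, ≤, ·, →, 0, 1) be a (bounded integral) contrapositionally residuated po-groupoid; write ∼x for x → 0. Then ∼∼x = x, ∼1 = 0 and ∼0 = 1; and defining x/y = ∼x → ∼y, the operation / satisfies the left residuation law x·y ≤ z ⇔ x ≤ z/y for all x, y, z, and 0/x = ∼x for all x. -/
/-- In a bounded integral contrapositionally residuated po-groupoid,
writing `∼x = x → 0`, we have `∼∼x = x`, `∼1 = 0`, `∼0 = 1`, and `x/y := ∼x → ∼y`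
satisfies the left residuation law and `0/x = ∼x`. -/
theorem stmt_3 {G : Type*} [PartialOrder G]
    (mul arr : G → G → G) (z o : G)
    (hbot : ∀ x, z ≤ x) (htop : ∀ x, x ≤ o)
    (honer : ∀ x, mul x o = x) (honel : ∀ x, mul o x = x)
    (harr1 : ∀ x, arr o x = x)
    (sim : G → G) (hsim : ∀ x, sim x = arr x z)
    (hres : ∀ x y w, mul x y ≤ w ↔ x ≤ arr (sim w) (sim y))
    (dvd : G → G → G) (hdvd : ∀ x y, dvd x y = arr (sim x) (sim y)) :
    (∀ x, sim (sim x) = x) ∧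
    sim o = z ∧
    sim z = o ∧
    (∀ x y w, mul x y ≤ w ↔ x ≤ dvd w y) ∧
    (∀ x, dvd z x = sim x) := by
  have h1 : sim o = z := by rw [hsim, harr1]
  have h2 : ∀ x, sim (sim x) = x := by
    intro x
    have key : ∀ a, a ≤ x ↔ a ≤ sim (sim x) := by
      intro a
      have h := hres a o x
      rwa [honer, h1, ← hsim] at h
    exact le_antisymm ((key _).2 le_rfl) ((key _).1 le_rfl)
  have h3 : sim z = o := by rw [← h1, h2]
  refine ⟨h2, h1, h3, ?_, ?_⟩
  · intro x y w
    rw [hdvd]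
    exact hres x y w
  · intro x
    rw [hdvd, h3, harr1]
end

section
/- For a (bounded integral) left-residuated po-groupoid G, the following are equivalent: (a) G satisfies the divisibility law (x/y)·y = (y/x)·x for all x, y; (b) for all x, y, one has x ≤ y if and only if x = z·y for some z; (c) for all x, y, the element (x/y)·y is the infimum of {x, y} in (G, ≤). -/
/-- For a bounded integral left-residuated po-groupoid, the following
are equivalent: (a) divisibility `(x/y)·y = (y/x)·x`; (b) `x ≤ y` iff `x = z·y` for
some `z`; (c) `(x/y)·y` is the infimum of `{x, y}`. -/
theorem stmt_7 {G : Type*} [PartialOrder G]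
    (mul dvd : G → G → G) (z o : G)
    (hbot : ∀ x, z ≤ x) (htop : ∀ x, x ≤ o)
    (honer : ∀ x, mul x o = x) (honel : ∀ x, mul o x = x)
    (hres : ∀ x y w, mul x y ≤ w ↔ x ≤ dvd w y) :
    ((∀ x y, mul (dvd x y) y = mul (dvd y x) x) ↔
      (∀ x y, x ≤ y ↔ ∃ w, x = mul w y)) ∧
    ((∀ x y, x ≤ y ↔ ∃ w, x = mul w y) ↔
      (∀ x y, IsGLB ({x, y} : Set G) (mul (dvd x y) y))) := by
  have mono : ∀ a b c, a ≤ b → mul a c ≤ mul b c := fun a b c h =>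
    (hres a c _).2 (h.trans ((hres b c _).1 le_rfl))
  have ler : ∀ w y, mul w y ≤ y := fun w y => by
    have h := mono w o y (htop w)
    rwa [honel] at h
  have lel : ∀ x y, mul (dvd x y) y ≤ x := fun x y => (hres _ _ _).2 le_rfl
  have ab : (∀ x y, mul (dvd x y) y = mul (dvd y x) x) →
      (∀ x y, x ≤ y ↔ ∃ w, x = mul w y) := by
    intro ha x y
    constructor
    · intro h
      have h1 : dvd y x = o := le_antisymm (htop _) ((hres o x y).1 (by rwa [honel]))
      exact ⟨dvd x y, by rw [ha, h1, honel]⟩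
    · rintro ⟨w, rfl⟩
      exact ler w y
  have bc : (∀ x y, x ≤ y ↔ ∃ w, x = mul w y) →
      (∀ x y, IsGLB ({x, y} : Set G) (mul (dvd x y) y)) := by
    intro hb x y
    constructor
    · rintro a (rfl | rfl)
      · exact lel _ _
      · exact ler _ _
    · intro l hl
      have hx : l ≤ x := hl (by simp)
      have hy : l ≤ y := hl (by simp)
      obtain ⟨w, rfl⟩ := (hb l y).1 hy
      exact mono _ _ _ ((hres _ _ _).1 hx)
  have ca : (∀ x y, IsGLB ({x, y} : Set G) (mul (dvd x y) y)) →
      (∀ x y, mul (dvd x y) y = mul (dvd y x) x) := by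
    intro hc x y
    have h := hc y x
    rw [Set.pair_comm] at h
    exact (hc x y).unique h
  exact ⟨⟨ab, fun h => ca (bc h)⟩, ⟨bc, fun h => ab (ca h)⟩⟩
end

section
/- A (bounded integral) left-residuated po-groupoid G satisfies the double negation law ¬¬x = x together with the condition ¬x/y ≤ ¬z ⇔ z ≤ x·y (for all x, y, z) if and only if it satisfies the single equation x·y = ¬(¬x/y) for all x, y. In this case, x ≤ y if and only if ¬y ≤ ¬x, for all x, y. -/
/-- A bounded integral left-residuated po-groupoid satisfies `¬¬x = x`
together with CAP (`¬x/y ≤ ¬z ↔ z ≤ x·y`) iff it satisfies `x·y = ¬(¬x/y)`;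
in that case `x ≤ y ↔ ¬y ≤ ¬x`. -/
theorem stmt_8 {G : Type*} [PartialOrder G]
    (mul dvd : G → G → G) (z o : G)
    (hbot : ∀ x, z ≤ x) (htop : ∀ x, x ≤ o)
    (honer : ∀ x, mul x o = x) (honel : ∀ x, mul o x = x)
    (hres : ∀ x y w, mul x y ≤ w ↔ x ≤ dvd w y)
    (neg : G → G) (hneg : ∀ x, neg x = dvd z x) :
    (((∀ x, neg (neg x) = x) ∧
        (∀ x y w, dvd (neg x) y ≤ neg w ↔ w ≤ mul x y)) ↔
      (∀ x y, mul x y = neg (dvd (neg x) y))) ∧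
    ((∀ x y, mul x y = neg (dvd (neg x) y)) →
      ∀ x y, x ≤ y ↔ neg y ≤ neg x) := by
  have d1 : ∀ w, dvd w o = w := fun w => le_antisymm
    (by have := (hres (dvd w o) o w).2 le_rfl; rwa [honer] at this)
    ((hres w o w).1 (by rw [honer]))
  have n0 : neg z = o := le_antisymm (htop _)
    (by rw [hneg]; exact (hres o z z).1 (by rw [honel]))
  have key : (∀ x y, mul x y = neg (dvd (neg x) y)) →
      (∀ x, neg (neg x) = x) ∧ (∀ a w, a ≤ neg w ↔ w ≤ neg a) := by
    intro h
    have dn : ∀ x, neg (neg x) = x := by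
      intro x
      have := h x o
      rw [honer, d1] at this
      exact this.symm
    have gal : ∀ a w, a ≤ neg w → w ≤ neg a := by
      intro a w haw
      rw [hneg w] at haw
      have h0 : mul a w = z := le_antisymm ((hres a w z).2 haw) (hbot _)
      have h1 : dvd (neg a) w = o := by
        rw [← dn (dvd (neg a) w), ← h a w, h0, n0]
      have h2 := (hres o w (neg a)).2 h1.ge
      rwa [honel] at h2
    exact ⟨dn, fun a w => ⟨gal a w, gal w a⟩⟩
  refine ⟨⟨?_, ?_⟩, ?_⟩
  · rintro ⟨dn, cap⟩ x y
    have anti : ∀ x w, neg x ≤ neg w ↔ w ≤ x := by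
      intro x w
      have := cap x o w
      rwa [honer, d1] at this
    apply le_antisymm
    · rw [← anti, dn]
      exact (cap x y _).2 le_rfl
    · rw [← cap, dn]
  · intro h
    obtain ⟨dn, gal⟩ := key h
    exact ⟨dn, fun x y w => by rw [h x y]; exact gal _ _⟩
  · intro h x y
    obtain ⟨dn, gal⟩ := key h
    rw [gal, dn]
end

section
/- Let G be a (bounded integral) left-residuated po-groupoid satisfying the divisibility law (x/y)·y = (y/x)·x and the equation x·y = ¬(¬x/y). Then for every a ∈ G, the map δ_a : x ↦ ¬x·a is an antitone involution on the principal ideal {x : x ≤ a}: for all x, ¬x·a = ¬(x/a) and ¬x·a ≤ a; if x ≤ y ≤ a then ¬y·a ≤ ¬x·a; and if x ≤ a then ¬(¬x·a)·a = x. -/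
/-- In a bounded integral left-residuated po-groupoid satisfying
divisibility and `x·y = ¬(¬x/y)`, for every `a` the map `δ_a : x ↦ ¬x·a` is an
antitone involution on the principal ideal `(a]`. -/
theorem stmt_9 {G : Type*} [PartialOrder G]
    (mul dvd : G → G → G) (z o : G)
    (hbot : ∀ x, z ≤ x) (htop : ∀ x, x ≤ o)
    (honer : ∀ x, mul x o = x) (honel : ∀ x, mul o x = x)
    (hres : ∀ x y w, mul x y ≤ w ↔ x ≤ dvd w y)
    (neg : G → G) (hneg : ∀ x, neg x = dvd z x)
    (hdiv : ∀ x y, mul (dvd x y) y = mul (dvd y x) x)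
    (hjk : ∀ x y, mul x y = neg (dvd (neg x) y)) :
    ∀ a : G,
      (∀ x, mul (neg x) a = neg (dvd x a)) ∧
      (∀ x, mul (neg x) a ≤ a) ∧
      (∀ x y, x ≤ y → y ≤ a → mul (neg y) a ≤ mul (neg x) a) ∧
      (∀ x, x ≤ a → mul (neg (mul (neg x) a)) a = x) := by
  have hd1 : ∀ x, dvd x o = x := fun x => le_antisymm
    (by have := (hres (dvd x o) o x).2 le_rfl; rwa [honer] at this)
    ((hres x o x).1 (by rw [honer]))
  have hnn : ∀ x, neg (neg x) = x := fun x => by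
    have := hjk x o
    rw [honer, hd1] at this
    exact this.symm
  have hmm : ∀ x x' y, x ≤ x' → mul x y ≤ mul x' y := fun x x' y h =>
    (hres _ _ _).2 (h.trans ((hres _ _ _).1 le_rfl))
  have hdm : ∀ x x' y, x ≤ x' → dvd x y ≤ dvd x' y := fun x x' y h =>
    (hres _ _ _).1 (((hres _ _ _).2 le_rfl).trans h)
  have hmeet : ∀ x y, x ≤ y → mul (dvd x y) y = x := fun x y h => by
    have h1 : dvd y x = o := le_antisymm (htop _) ((hres _ _ _).1 (by rw [honel]; exact h))
    rw [hdiv, h1, honel]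
  have hanti : ∀ x y, x ≤ y → neg y ≤ neg x := fun x y h => by
    have h1 : neg x = dvd (neg (dvd x y)) y := by
      have h2 := hjk (dvd x y) y
      rw [hmeet x y h] at h2
      rw [← hnn (dvd (neg (dvd x y)) y), ← h2]
    rw [h1, hneg y]
    exact hdm _ _ _ (hbot _)
  intro a
  have h1 : ∀ x, mul (neg x) a = neg (dvd x a) := fun x => by rw [hjk, hnn]
  refine ⟨h1, fun x => ?_, fun x y hxy _ => hmm _ _ _ (hanti _ _ hxy), fun x hx => ?_⟩
  · have := hmm (neg x) o a (htop _)
    rwa [honel] at this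
  · rw [h1 x, hnn, hmeet x a hx]
end

section
/- Let G be a (bounded integral) left-residuated po-groupoid satisfying the divisibility law (x/y)·y = (y/x)·x and the equation x·y = ¬(¬x/y). Then the underlying poset of G is a lattice: for all x, y, the element (x/y)·y is the infimum of {x, y} and the element ¬((¬x/¬y)·¬y) is the supremum of {x, y}. -/
/-- In a bounded integral left-residuated po-groupoid satisfying
divisibility and `x·y = ¬(¬x/y)`, the underlying poset is a lattice with
`x ∧ y = (x/y)·y` and `x ∨ y = ¬((¬x/¬y)·¬y)`. -/
theorem stmt_10 {G : Type*} [PartialOrder G]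
    (mul dvd : G → G → G) (z o : G)
    (hbot : ∀ x, z ≤ x) (htop : ∀ x, x ≤ o)
    (honer : ∀ x, mul x o = x) (honel : ∀ x, mul o x = x)
    (hres : ∀ x y w, mul x y ≤ w ↔ x ≤ dvd w y)
    (neg : G → G) (hneg : ∀ x, neg x = dvd z x)
    (hdiv : ∀ x y, mul (dvd x y) y = mul (dvd y x) x)
    (hjk : ∀ x y, mul x y = neg (dvd (neg x) y)) :
    ∀ x y : G,
      IsGLB ({x, y} : Set G) (mul (dvd x y) y) ∧
      IsLUB ({x, y} : Set G) (neg (mul (dvd (neg x) (neg y)) (neg y))) := by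
  have hle : ∀ x y, x ≤ y → dvd y x = o := fun x y h =>
    le_antisymm (htop _) ((hres _ _ _).1 (by rw [honel]; exact h))
  have hd1 : ∀ w, dvd w o = w := fun w => by
    apply le_antisymm
    · have := (hres (dvd w o) o w).2 le_rfl
      rwa [honer] at this
    · exact (hres _ _ _).1 (by rw [honer])
  have hnn : ∀ x, neg (neg x) = x := fun x => by
    have := hjk x o
    rw [honer, hd1] at this
    exact this.symm
  have hno : neg o = z := by rw [hneg, hd1]
  have hanti : ∀ x y, x ≤ y → neg y ≤ neg x := fun x y h => by
    rw [hneg x, ← hres, hjk, hnn, hle x y h, hno]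
  have hml : ∀ x y w, x ≤ y → mul x w ≤ mul y w := fun x y w h =>
    (hres _ _ _).2 (h.trans ((hres _ _ _).1 le_rfl))
  have hdl : ∀ x y w, x ≤ y → dvd x w ≤ dvd y w := fun x y w h =>
    (hres _ _ _).1 (((hres _ _ _).2 le_rfl).trans h)
  have h1 : ∀ x y, mul (dvd x y) y ≤ x := fun x y => (hres _ _ _).2 le_rfl
  have h2 : ∀ x y, mul (dvd x y) y ≤ y := fun x y => by rw [hdiv]; exact h1 _ _
  have h3 : ∀ x y w, w ≤ x → w ≤ y → w ≤ mul (dvd x y) y := fun x y w hx hy => by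
    have e : mul (dvd w y) y = w := by rw [hdiv, hle w y hy, honel]
    calc w = mul (dvd w y) y := e.symm
      _ ≤ _ := hml _ _ _ (hdl _ _ _ hx)
  intro x y
  refine ⟨⟨?_, ?_⟩, ⟨?_, ?_⟩⟩
  · rintro a (rfl | rfl)
    · exact h1 _ _
    · exact h2 _ _
  · intro w hw
    exact h3 _ _ _ (hw (by simp)) (hw (by simp))
  · rintro a (rfl | rfl)
    · have := hanti _ _ (h1 (neg a) (neg y))
      rwa [hnn] at this
    · have := hanti _ _ (h2 (neg x) (neg a))
      rwa [hnn] at this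
  · intro w hw
    have := hanti _ _ (h3 (neg x) (neg y) (neg w)
      (hanti _ _ (hw (by simp))) (hanti _ _ (hw (by simp))))
    rwa [hnn w] at this
end

section
/- Let G be a (bounded integral) left-residuated po-groupoid satisfying the double negation law ¬¬x = x and the equation (x → y) → y = (y → x) → x, where x → y = ¬x/¬y. Then for all x, y: 1 → x = x, and x ≤ y → x. -/
/-- In a bounded integral left-residuated po-groupoid with `¬¬x = x`
and `(x → y) → y = (y → x) → x` (where `x → y = ¬x/¬y`): `1 → x = x` and `x ≤ y → x`. -/
theorem stmt_11 {G : Type*} [PartialOrder G]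
    (mul dvd : G → G → G) (z o : G)
    (hbot : ∀ x, z ≤ x) (htop : ∀ x, x ≤ o)
    (honer : ∀ x, mul x o = x) (honel : ∀ x, mul o x = x)
    (hres : ∀ x y w, mul x y ≤ w ↔ x ≤ dvd w y)
    (neg : G → G) (hneg : ∀ x, neg x = dvd z x)
    (arr : G → G → G) (harr : ∀ x y, arr x y = dvd (neg x) (neg y))
    (hdn : ∀ x, neg (neg x) = x)
    (hw : ∀ x y, arr (arr x y) y = arr (arr y x) x) :
    (∀ x, arr o x = x) ∧
    (∀ x y, x ≤ arr y x) := by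
  have hno : neg o = z := by
    apply le_antisymm _ (hbot _)
    have h := (hres (neg o) o z).2 (hneg o).le
    rwa [honer] at h
  refine ⟨fun x => ?_, fun x y => ?_⟩
  · rw [harr, hno, ← hneg, hdn]
  · rw [harr, ← hres]
    refine le_trans ((hres _ _ z).2 ?_) (hbot _)
    rw [← hneg, hdn]
end

section
/- Let G be a (bounded integral) left-residuated po-groupoid satisfying the double negation law ¬¬x = x and the equation (x → y) → y = (y → x) → x, where x → y = ¬x/¬y. Then the underlying poset of G is a join-semilattice in which, for all x, y, the element (x → y) → y is the supremum of {x, y}. -/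
/-- In a bounded integral left-residuated po-groupoid with `¬¬x = x`
and `(x → y) → y = (y → x) → x` (where `x → y = ¬x/¬y`), the underlying poset is a
join-semilattice in which `(x → y) → y` is the supremum of `{x, y}`. -/
theorem stmt_13 {G : Type*} [PartialOrder G]
    (mul dvd : G → G → G) (z o : G)
    (hbot : ∀ x, z ≤ x) (htop : ∀ x, x ≤ o)
    (honer : ∀ x, mul x o = x) (honel : ∀ x, mul o x = x)
    (hres : ∀ x y w, mul x y ≤ w ↔ x ≤ dvd w y)
    (neg : G → G) (hneg : ∀ x, neg x = dvd z x)
    (arr : G → G → G) (harr : ∀ x y, arr x y = dvd (neg x) (neg y))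
    (hdn : ∀ x, neg (neg x) = x)
    (hw : ∀ x y, arr (arr x y) y = arr (arr y x) x) :
    ∀ x y : G, IsLUB ({x, y} : Set G) (arr (arr x y) y) := by
  have mono : ∀ a b c, a ≤ b → dvd a c ≤ dvd b c := fun a b c h =>
    (hres _ _ _).1 (le_trans ((hres _ _ _).2 le_rfl) h)
  have top_of : ∀ x y, neg y ≤ neg x → arr x y = o := fun x y h => by
    apply le_antisymm (htop _)
    rw [harr, ← hres, honel]
    exact h
  have nego : neg o = z := by
    apply le_antisymm _ (hbot _)
    have h := (hres (neg o) o z).2 (le_of_eq (hneg o))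
    rwa [honer] at h
  have arro : ∀ x, arr o x = x := fun x => by
    rw [harr, nego, ← hneg, hdn]
  have right_le : ∀ a y, y ≤ arr a y := fun a y => by
    have h := mono z (neg a) (neg y) (hbot _)
    rwa [← hneg, hdn, ← harr] at h
  have key : ∀ x y, neg y ≤ neg x → x ≤ y := fun x y h => by
    have h1 := hw x y
    rw [top_of x y h, arro] at h1
    rw [h1]
    exact right_le _ _
  have anti : ∀ x y, x ≤ y → neg y ≤ neg x := fun x y h => by
    apply key
    rw [hdn, hdn]
    exact h
  have arr_anti : ∀ x y c, x ≤ y → arr y c ≤ arr x c := fun x y c h => by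
    rw [harr, harr]
    exact mono _ _ _ (anti _ _ h)
  intro x y
  constructor
  · rintro w (rfl | rfl)
    · rw [hw]
      exact right_le _ _
    · exact right_le _ _
  · intro u hu
    have hx : x ≤ u := hu (by simp)
    have hy : y ≤ u := hu (by simp)
    have h1 := arr_anti _ _ y (arr_anti _ _ y hx)
    rwa [hw u y, top_of y u (anti _ _ hy), arro] at h1
end

section
/- Let G be a (bounded integral) left-residuated po-groupoid satisfying the double negation law ¬¬x = x and the equation (x → y) → y = (y → x) → x, where x → y = ¬x/¬y. Then for every a ∈ G, the map γ_a : x ↦ x → a is an antitone involution on the principal filter {x : a ≤ x}: for all x, a ≤ x → a; if a ≤ x ≤ y then y → a ≤ x → a; and if a ≤ x then (x → a) → a = x. -/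
/-- In a bounded integral left-residuated po-groupoid with `¬¬x = x`
and `(x → y) → y = (y → x) → x` (where `x → y = ¬x/¬y`), for every `a` the map
`γ_a : x ↦ x → a` is an antitone involution on the principal filter `[a)`. -/
theorem stmt_14 {G : Type*} [PartialOrder G]
    (mul dvd : G → G → G) (z o : G)
    (hbot : ∀ x, z ≤ x) (htop : ∀ x, x ≤ o)
    (honer : ∀ x, mul x o = x) (honel : ∀ x, mul o x = x)
    (hres : ∀ x y w, mul x y ≤ w ↔ x ≤ dvd w y)
    (neg : G → G) (hneg : ∀ x, neg x = dvd z x)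
    (arr : G → G → G) (harr : ∀ x y, arr x y = dvd (neg x) (neg y))
    (hdn : ∀ x, neg (neg x) = x)
    (hw : ∀ x y, arr (arr x y) y = arr (arr y x) x) :
    ∀ a : G,
      (∀ x, a ≤ arr x a) ∧
      (∀ x y, a ≤ x → x ≤ y → arr y a ≤ arr x a) ∧
      (∀ x, a ≤ x → arr (arr x a) a = x) := by
  have h1 : neg o = z := by
    rw [hneg]
    apply le_antisymm _ (hbot _)
    have := (hres (dvd z o) o z).2 le_rfl
    rwa [honer] at this
  have hone : ∀ x, arr o x = x := by
    intro x
    rw [harr, h1, ← hneg, hdn]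
  have hmn : ∀ x, mul x (neg x) ≤ z := by
    intro x
    rw [hres, ← hneg, hdn]
  have hle : ∀ x w, x ≤ arr w x := by
    intro x w
    rw [harr, ← hres]
    exact (hmn x).trans (hbot _)
  have htriv : ∀ x y, neg y ≤ neg x → arr x y = o := by
    intro x y h
    apply le_antisymm (htop _)
    rw [harr, ← hres, honel]
    exact h
  have hrefl : ∀ x y, neg y ≤ neg x → x ≤ y := by
    intro x y h
    have e := hw x y
    rw [htriv x y h, hone] at e
    rw [e]
    exact hle _ _
  have hanti : ∀ x y, x ≤ y → neg y ≤ neg x := by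
    intro x y h
    apply hrefl
    rw [hdn, hdn]
    exact h
  intro a
  refine ⟨fun x => hle a x, fun x y _ hxy => ?_, fun x hx => ?_⟩
  · rw [harr x, ← hres]
    refine le_trans ?_ (hanti x y hxy)
    rw [hres, ← harr]
  · rw [hw, htriv a x (hanti a x hx), hone]
end

section
/- A commutative (bounded integral) left-residuated po-groupoid G (i.e., one with x·y = y·x for all x, y) satisfies the equation x·y = ¬(¬x/y) for all x, y if and only if it satisfies the contraposition law x/y = ¬y/¬x for all x, y. -/
/-- A commutative bounded integral left-residuated po-groupoid
satisfies `x·y = ¬(¬x/y)` iff it satisfies the contraposition law `x/y = ¬y/¬x`. -/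
theorem stmt_15 {G : Type*} [PartialOrder G]
    (mul dvd : G → G → G) (z o : G)
    (hbot : ∀ x, z ≤ x) (htop : ∀ x, x ≤ o)
    (honer : ∀ x, mul x o = x) (honel : ∀ x, mul o x = x)
    (hres : ∀ x y w, mul x y ≤ w ↔ x ≤ dvd w y)
    (hcomm : ∀ x y, mul x y = mul y x)
    (neg : G → G) (hneg : ∀ x, neg x = dvd z x) :
    (∀ x y, mul x y = neg (dvd (neg x) y)) ↔
    (∀ x y, dvd x y = dvd (neg y) (neg x)) := by
  have gal : ∀ a b, a ≤ neg b ↔ b ≤ neg a := by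
    intro a b
    rw [hneg, hneg, ← hres, ← hres, hcomm]
  have d1 : ∀ x, dvd x o = x := by
    intro x
    apply le_antisymm
    · have h := (hres (dvd x o) o x).2 le_rfl
      rwa [honer] at h
    · rw [← hres, honer]
  have swap : ∀ a b : G, neg (neg a) = a → neg (neg b) = b → (neg a ≤ b ↔ neg b ≤ a) := by
    intro a b ha hb
    have h := gal (neg a) (neg b)
    rwa [ha, hb] at h
  constructor
  · intro h x y
    have inv : ∀ x, neg (neg x) = x := by
      intro x
      have h1 := h x o
      rw [honer, d1] at h1
      exact h1.symm
    have key : ∀ w, w ≤ dvd x y ↔ w ≤ dvd (neg y) (neg x) := by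
      intro w
      rw [← hres, hcomm, h, swap _ _ (inv _) (inv _), ← hres, hcomm, hres]
    exact le_antisymm ((key _).1 le_rfl) ((key _).2 le_rfl)
  · intro h x y
    have inv : ∀ x, neg (neg x) = x := by
      intro x
      have h1 := h x o
      have h2 : neg o = z := by rw [hneg, d1]
      rw [d1, h2, ← hneg] at h1
      exact h1.symm
    have key : ∀ w, mul x y ≤ w ↔ neg (dvd (neg x) y) ≤ w := by
      intro w
      rw [swap _ _ (inv _) (inv _), ← hres, hcomm (neg w), hres y, ← h, ← hres, hcomm]
    exact le_antisymm ((key _).2 le_rfl) ((key _).1 le_rfl)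
end

section
/- Let G be a (bounded integral) left-residuated po-groupoid. (i) If G satisfies the contraposition law x/y = ¬y/¬x for all x, y, then G satisfies the double negation law ¬¬x = x. (ii) If in addition the underlying poset of G is a lattice, G is commutative (x·y = y·x), and G satisfies the skew divisibility law (¬y/¬x)·y = x ⊓ y for all x, y (where ⊓ is the lattice meet), then G satisfies the contraposition law x/y = ¬y/¬x and the divisibility law (x/y)·y = x ⊓ y. -/
/-- (i) In a bounded integral left-residuated po-groupoid, the
contraposition law `x/y = ¬y/¬x` implies the double negation law `¬¬x = x`.
(ii) If moreover the underlying poset is a lattice, `G` is commutative and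
satisfies skew divisibility `(¬y/¬x)·y = x ⊓ y`, then `G` satisfies the
contraposition law and the divisibility law `(x/y)·y = x ⊓ y`. -/
theorem stmt_16 {G : Type*} [PartialOrder G]
    (mul dvd : G → G → G) (z o : G)
    (hbot : ∀ x, z ≤ x) (htop : ∀ x, x ≤ o)
    (honer : ∀ x, mul x o = x) (honel : ∀ x, mul o x = x)
    (hres : ∀ x y w, mul x y ≤ w ↔ x ≤ dvd w y)
    (neg : G → G) (hneg : ∀ x, neg x = dvd z x) :
    ((∀ x y, dvd x y = dvd (neg y) (neg x)) → ∀ x, neg (neg x) = x) ∧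
    (∀ inf sup : G → G → G,
      (∀ x y, IsGLB ({x, y} : Set G) (inf x y)) →
      (∀ x y, IsLUB ({x, y} : Set G) (sup x y)) →
      (∀ x y, mul x y = mul y x) →
      (∀ x y, mul (dvd (neg y) (neg x)) y = inf x y) →
      (∀ x y, dvd x y = dvd (neg y) (neg x)) ∧
      (∀ x y, mul (dvd x y) y = inf x y)) := by
  have d1 : ∀ x, dvd x o = x := fun x => le_antisymm
    (by have h := (hres (dvd x o) o x).2 le_rfl
        rwa [honer] at h)
    ((hres x o x).1 (honer x).le)
  have n1 : neg o = z := by rw [hneg, d1]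
  constructor
  · intro hc x
    have h := hc x o
    rw [d1, n1, ← hneg] at h
    exact h.symm
  · intro inf sup hinf _ _ hs
    have infl : ∀ x y, inf x y ≤ x := fun x y => (hinf x y).1 (by simp)
    have nn : ∀ x, neg (neg x) = x := by
      intro x
      have h := hs x o
      rw [n1, honer, ← hneg] at h
      rw [h]
      apply le_antisymm (infl x o)
      apply (hinf x o).2
      rintro w (rfl | rfl)
      · exact le_rfl
      · exact htop x
    have key : ∀ x y, dvd (neg y) (neg x) ≤ dvd x y := fun x y =>
      (hres _ _ _).1 ((hs x y).le.trans (infl x y))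
    have hc : ∀ x y, dvd x y = dvd (neg y) (neg x) := by
      intro x y
      apply le_antisymm _ (key x y)
      have h := key (neg y) (neg x)
      rwa [nn, nn] at h
    exact ⟨hc, fun x y => by rw [hc, hs]⟩
end

section
/- On the real unit interval A = [0,1], define ¬x = √(1 − x²) and define the multiplication x·y = x if y = 1, and x·y = max(y − ¬x, 0) if y < 1. Then: (i) the multiplication is monotone in the left argument on the left, i.e., for all x, y, z ∈ A, x ≤ y implies z·x ≤ z·y; and (ii) for every x ∈ A with 0 < x < 1, setting y = 1 − √(1 − x²), there is no element b ∈ A such that for all z ∈ A, x·z ≤ y if and only if z ≤ b (i.e., the multiplication admits no right residuum). -/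
/-- On `A = [0,1] ⊆ ℝ`, with `¬x = √(1 - x²)` and `x·y = x` if
`y = 1`, `x·y = max (y - ¬x) 0` if `y < 1`: (i) multiplication is monotone on the
left; (ii) for `0 < x < 1` and `y = 1 - √(1 - x²)`, there is no right residuum
`b ∈ A` with `x·z ≤ y ↔ z ≤ b` for all `z ∈ A`. -/
theorem stmt_19
    (neg : ℝ → ℝ) (hneg : ∀ x, neg x = Real.sqrt (1 - x ^ 2))
    (mul : ℝ → ℝ → ℝ)
    (hmul1 : ∀ x, mul x 1 = x)
    (hmul2 : ∀ x y, y < 1 → mul x y = max (y - neg x) 0) :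
    (∀ x y w, x ∈ Set.Icc (0 : ℝ) 1 → y ∈ Set.Icc (0 : ℝ) 1 →
      w ∈ Set.Icc (0 : ℝ) 1 → x ≤ y → mul w x ≤ mul w y) ∧
    (∀ x ∈ Set.Icc (0 : ℝ) 1, 0 < x → x < 1 →
      ¬ ∃ b ∈ Set.Icc (0 : ℝ) 1,
        ∀ w ∈ Set.Icc (0 : ℝ) 1, (mul x w ≤ 1 - Real.sqrt (1 - x ^ 2) ↔ w ≤ b)) := by
  constructor
  · intro x y w hx hy hw hxy
    obtain ⟨hw0, hw1⟩ := hw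
    rcases lt_or_eq_of_le hy.2 with h | h
    · rw [hmul2 w x (lt_of_le_of_lt hxy h), hmul2 w y h]
      exact max_le_max (by linarith) le_rfl
    · subst h
      rw [hmul1]
      rcases lt_or_eq_of_le hx.2 with h | h
      · rw [hmul2 w x h, hneg]
        have : 1 - w ≤ Real.sqrt (1 - w ^ 2) := by
          apply Real.le_sqrt_of_sq_le
          nlinarith
        exact max_le (by linarith) hw0
      · rw [h, hmul1]
  · rintro x - h0 h1 ⟨b, hb, H⟩
    have hs : 1 - x < Real.sqrt (1 - x ^ 2) := by
      apply Real.lt_sqrt_of_sq_lt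
      nlinarith
    have hs1 : Real.sqrt (1 - x ^ 2) ≤ 1 := by
      rw [Real.sqrt_le_one]
      nlinarith
    rcases lt_or_eq_of_le hb.2 with h | h
    · have hw : (b + 1) / 2 < 1 := by linarith
      have := (H ((b + 1) / 2) ⟨by linarith [hb.1], hw.le⟩).1 (by
        rw [hmul2 _ _ hw, hneg]
        exact max_le (by linarith) (by linarith))
      linarith
    · have := (H 1 ⟨by norm_num, le_rfl⟩).2 h.ge
      rw [hmul1] at this
      linarith
end
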